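/- arXiv:1404.4833 — 2 statements merged into one kernel-verified Lean document; each statement's English description precedes it below -/
import Mathlib

section
/- Theorem 1(iv) of Turyn and Storer is false: there exist n, a binary sequence x of length n, and positive integers t and p with p > 1, 2t+1 ≤ n, x_i = 1 for 1 ≤ i ≤ p, x_{p+1} = -1, such that x satisfies equation (k) for all 1 ≤ k ≤ t, and yet there exists an integer k with 1 ≤ k ≤ t/p for which the derived sequence z defined by z_j = x_{p(j-1)+1} does not satisfy equation (k). -/
/-- A binary sequence `x` (1-indexed) satisfies equation (k) if
`∑_{i=1}^{k} (-1)^{i+1} x_i x_{2k+2-i} = (1+(-1)^{k+1})/2`. -/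
def SatisfiesEqn (x : ℕ → ℤ) (k : ℕ) : Prop :=
  ∑ i ∈ Finset.Icc 1 k, (-1 : ℤ) ^ (i + 1) * x i * x (2 * k + 2 - i)
    = (1 + (-1 : ℤ) ^ (k + 1)) / 2

/-- Theorem 1(iv) of Turyn and Storer is false: there exist a length `n`, a
binary sequence `x` of length `n`, and positive integers `t` and `p` with
`p > 1`, `2t+1 ≤ n`, `x_i = 1` for `1 ≤ i ≤ p`, `x_{p+1} = -1`, such that `x`
satisfies equation (k) for all `1 ≤ k ≤ t`, and yet for some `k` with
`1 ≤ k ≤ t/p` the derived sequence `z_j = x_{p(j-1)+1}` does not satisfy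
equation (k). -/
theorem turyn_storer_theorem_one_iv_is_false :
    ∃ (n : ℕ) (x : ℕ → ℤ) (t p : ℕ),
      1 ≤ t ∧ 1 < p ∧ 2 * t + 1 ≤ n ∧
      (∀ i : ℕ, 1 ≤ i → i ≤ n → x i = 1 ∨ x i = -1) ∧
      (∀ i : ℕ, 1 ≤ i → i ≤ p → x i = 1) ∧
      x (p + 1) = -1 ∧
      (∀ k : ℕ, 1 ≤ k → k ≤ t → SatisfiesEqn x k) ∧
      ∃ k : ℕ, 1 ≤ k ∧ (k : ℚ) ≤ (t : ℚ) / (p : ℚ) ∧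
        ¬ SatisfiesEqn (fun j => x (p * (j - 1) + 1)) k := by
  refine ⟨31, fun i => if (6 ≤ i ∧ i ≤ 10) ∨ (21 ≤ i ∧ i ≤ 25) ∨ 28 ≤ i then -1 else 1, 15, 5,
    by norm_num, by norm_num, by norm_num, ?_, ?_, by norm_num, ?_, 3, by norm_num,
    by norm_num, ?_⟩
  · intro i _ _
    dsimp only
    split_ifs <;> simp
  · intro i h1 h2
    interval_cases i <;> simp
  · intro k h1 h2
    unfold SatisfiesEqn
    interval_cases k <;> decide +kernel
  · unfold SatisfiesEqn
    decide +kernel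
end

section
/- For every odd integer p ≥ 3, let x be the binary sequence of length 7p-2 whose run-length encoding starting with +1 is (p, p, 2p, p, p-1, p-1), i.e. x_i = 1 for 1 ≤ i ≤ p, x_i = -1 for p+1 ≤ i ≤ 2p, x_i = 1 for 2p+1 ≤ i ≤ 4p, x_i = -1 for 4p+1 ≤ i ≤ 5p, x_i = 1 for 5p+1 ≤ i ≤ 6p-1, and x_i = -1 for 6p ≤ i ≤ 7p-2. Then x satisfies equation (k) for all 1 ≤ k ≤ 3p, while the derived sequence z of length 7 defined by z_j = x_{p(j-1)+1} equals (1,-1,1,1,-1,1,-1) and does not satisfy equation (3), even though 3 ≤ 3p/p. Hence for every odd p ≥ 3 there is a counterexample to Theorem 1(iv) of Turyn and Storer with this value of p. -/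
/-- The binary sequence z = (1,-1,1,1,-1,1,-1) of length 7. -/
def z7 : ℕ → ℤ := fun j =>
  if j = 1 then 1
  else if j = 2 then -1
  else if j = 3 then 1
  else if j = 4 then 1
  else if j = 5 then -1
  else if j = 6 then 1
  else -1

open PowerSeries in
theorem key_dvd (p : ℕ) (hodd : Odd p) (hp : 3 ≤ p) (x : ℕ → ℤ)
    (hx : ∀ i : ℕ, 1 ≤ i → i ≤ 6 * p + 1 → x i = if i ≤ p then 1 else if i ≤ 2 * p then -1
      else if i ≤ 4 * p then 1 else if i ≤ 5 * p then -1 else if i ≤ 6 * p - 1 then 1 else -1) :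
    (X : ℤ⟦X⟧) ^ (6 * p + 1) ∣ (1 - X) * (PowerSeries.mk fun n => x (n + 1)) -
      (1 - 2 * X ^ p + 2 * X ^ (2 * p) - 2 * X ^ (4 * p) + 2 * X ^ (5 * p)
        - 2 * X ^ (6 * p - 1)) := by
  rw [X_pow_dvd_iff]
  intro m hm
  have h2 : ∀ (n : ℕ), coeff m (2 * X ^ n : ℤ⟦X⟧) = if m = n then 2 else 0 := by
    intro n
    have : (2 * X ^ n : ℤ⟦X⟧) = C (2 : ℤ) * X ^ n := by simp
    rw [this, coeff_C_mul, coeff_X_pow]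
    simp
  simp only [sub_mul, one_mul, map_sub, map_add, h2, coeff_mk, coeff_one]
  rcases m with _ | m
  · rw [coeff_zero_X_mul, hx _ (by omega) (by omega)]
    split_ifs <;> omega
  · rw [coeff_succ_X_mul, coeff_mk, hx _ (by omega) (by omega), hx _ (by omega) (by omega)]
    clear h2 hx hodd
    rcases (by omega : m + 1 < p ∨ m + 1 = p ∨ (p < m + 1 ∧ m + 1 < 2 * p) ∨ m + 1 = 2 * p ∨
      (2 * p < m + 1 ∧ m + 1 < 4 * p) ∨ m + 1 = 4 * p ∨ (4 * p < m + 1 ∧ m + 1 < 5 * p) ∨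
      m + 1 = 5 * p ∨ (5 * p < m + 1 ∧ m + 1 < 6 * p - 1) ∨ m + 1 = 6 * p - 1 ∨
      m + 1 = 6 * p) with c | c | c | c | c | c | c | c | c | c | c <;>
    grind (splits := 30)

open PowerSeries in
theorem key_mul (p : ℕ) (hodd : Odd p) (hp : 3 ≤ p) (F : ℤ⟦X⟧)
    (h : (X : ℤ⟦X⟧) ^ (6 * p + 1) ∣ (1 - X) * F -
      (1 - 2 * X ^ p + 2 * X ^ (2 * p) - 2 * X ^ (4 * p) + 2 * X ^ (5 * p)
        - 2 * X ^ (6 * p - 1))) :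
    (X : ℤ⟦X⟧) ^ (6 * p + 1) ∣ (1 - X ^ 2) * (F * rescale (-1 : ℤ) F) - 1 := by
  obtain ⟨R, hR⟩ := h
  have hR2 := congrArg (rescale (-1 : ℤ)) hR
  have hX : rescale (-1 : ℤ) (X : ℤ⟦X⟧) = -X := by simp [rescale_X]
  have h5 : Odd (5 * p) := by rcases hodd with ⟨a, rfl⟩; exact ⟨5 * a + 2, by ring⟩
  have h6 : Odd (6 * p - 1) := ⟨3 * p - 1, by omega⟩
  have h61 : Odd (6 * p + 1) := ⟨3 * p, by omega⟩
  have h2 : Even (2 * p) := ⟨p, by omega⟩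
  have h4 : Even (4 * p) := ⟨2 * p, by omega⟩
  simp only [map_sub, map_mul, map_add, map_pow, map_one, map_ofNat, hX, hodd.neg_pow,
    h5.neg_pow, h6.neg_pow, h61.neg_pow, h2.neg_pow, h4.neg_pow] at hR2
  obtain ⟨q, rfl⟩ : ∃ q, p = q + 3 := ⟨p - 3, by omega⟩
  have e6 : 6 * (q + 3) - 1 = 6 * q + 17 := by omega
  rw [e6] at hR hR2
  generalize rescale (-1 : ℤ) F = F' at *
  generalize rescale (-1 : ℤ) R = R' at *
  have a1 := eq_add_of_sub_eq hR
  have a2 := eq_add_of_sub_eq hR2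
  have : (1 - X ^ 2) * (F * F') - 1 = ((1 - X) * F) * ((1 - -X) * F') - 1 := by ring
  rw [this, a1, a2]
  set Y : ℤ⟦X⟧ := X ^ q with hY
  have e : ∀ a b : ℕ, (X : ℤ⟦X⟧) ^ (a * q + b) = Y ^ a * X ^ b := by
    intro a b; rw [hY, pow_add, mul_comm a, pow_mul]
  have t1 : (X : ℤ⟦X⟧) ^ (q + 3) = Y * X ^ 3 := by rw [hY, pow_add]
  have t2 : (X : ℤ⟦X⟧) ^ (2 * (q + 3)) = Y ^ 2 * X ^ 6 := e 2 6
  have t4 : (X : ℤ⟦X⟧) ^ (4 * (q + 3)) = Y ^ 4 * X ^ 12 := e 4 12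
  have t5 : (X : ℤ⟦X⟧) ^ (5 * (q + 3)) = Y ^ 5 * X ^ 15 := e 5 15
  have t6 : (X : ℤ⟦X⟧) ^ (6 * q + 17) = Y ^ 6 * X ^ 17 := e 6 17
  have t7 : (X : ℤ⟦X⟧) ^ (6 * (q + 3) + 1) = Y ^ 6 * X ^ 19 := e 6 19
  rw [t1, t2, t4, t5, t6, t7]
  set A : ℤ⟦X⟧ := 1 - 2 * (Y * X ^ 3) + 2 * (Y ^ 2 * X ^ 6) - 2 * (Y ^ 4 * X ^ 12)
    + 2 * (Y ^ 5 * X ^ 15) - 2 * (Y ^ 6 * X ^ 17) with hA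
  set B : ℤ⟦X⟧ := 1 - 2 * -(Y * X ^ 3) + 2 * (Y ^ 2 * X ^ 6) - 2 * (Y ^ 4 * X ^ 12)
    + 2 * -(Y ^ 5 * X ^ 15) - 2 * -(Y ^ 6 * X ^ 17) with hB
  have hAB : A * B - 1 = Y ^ 6 * X ^ 19 * (4 * Y ^ 2 * X ^ 5 - 8 * Y * X
      - 4 * Y ^ 4 * X ^ 11 + 8 * Y ^ 5 * X ^ 13 - 4 * Y ^ 6 * X ^ 15) := by
    rw [hA, hB]; ring
  refine ⟨4 * Y ^ 2 * X ^ 5 - 8 * Y * X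
      - 4 * Y ^ 4 * X ^ 11 + 8 * Y ^ 5 * X ^ 13 - 4 * Y ^ 6 * X ^ 15
      + R * B - A * R' - Y ^ 6 * X ^ 19 * R * R', ?_⟩
  linear_combination hAB

open PowerSeries in
theorem key_coeff (N : ℕ) (G : ℤ⟦X⟧) (h : (X : ℤ⟦X⟧) ^ (N + 1) ∣ (1 - X ^ 2) * G - 1)
    (k : ℕ) (hk : 2 * k ≤ N) : coeff (2 * k) G = 1 := by
  rw [X_pow_dvd_iff] at h
  induction k with
  | zero =>
    have := h 0 (by omega)
    simp [sub_mul, coeff_X_pow_mul'] at this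
    simp
    linarith
  | succ k ih =>
    have h1 := h (2 * (k + 1)) (by omega)
    have h2 := ih (by omega)
    have e : 2 * (k + 1) - 2 = 2 * k := by omega
    simp only [sub_mul, one_mul, map_sub, coeff_X_pow_mul', coeff_one, e] at h1
    rw [if_pos (by omega), if_neg (by omega), h2] at h1
    linarith

theorem fold_sum (x : ℕ → ℤ) (k : ℕ) (hk : x (k + 1) * x (k + 1) = 1)
    (h : ∑ i ∈ Finset.range (2 * k + 1), (-1 : ℤ) ^ i * x (i + 1) * x (2 * k + 1 - i) = 1) :
    SatisfiesEqn x k := by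
  unfold SatisfiesEqn
  have hS : ∑ i ∈ Finset.Icc 1 k, (-1 : ℤ) ^ (i + 1) * x i * x (2 * k + 2 - i)
      = ∑ i ∈ Finset.range k, (-1 : ℤ) ^ i * x (i + 1) * x (2 * k + 1 - i) := by
    have hI : Finset.Icc 1 k = Finset.Ico (0 + 1) (k + 1) := by
      ext i; simp
    rw [Finset.range_eq_Ico, hI, ← Finset.sum_Ico_add' (fun i => (-1 : ℤ) ^ (i + 1) * x i *
      x (2 * k + 2 - i)) 0 k 1]
    refine Finset.sum_congr rfl fun i hi => ?_
    have : 2 * k + 2 - (i + 1) = 2 * k + 1 - i := by omega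
    rw [this]; ring
  rw [hS]
  have hsplit : 2 * k + 1 = (k + 1) + k := by omega
  have h' := h
  rw [Finset.sum_congr (by rw [hsplit]) (fun _ _ => rfl), Finset.sum_range_add,
    Finset.sum_range_succ] at h'
  have hrev : ∑ i ∈ Finset.range k, (-1 : ℤ) ^ (k + 1 + i) * x (k + 1 + i + 1) *
      x (2 * k + 1 - (k + 1 + i))
      = ∑ i ∈ Finset.range k, (-1 : ℤ) ^ i * x (i + 1) * x (2 * k + 1 - i) := by
    rw [← Finset.sum_range_reflect]
    refine Finset.sum_congr rfl fun i hi => ?_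
    rw [Finset.mem_range] at hi
    have e1 : k + 1 + (k - 1 - i) + 1 = 2 * k + 1 - i := by omega
    have e2 : 2 * k + 1 - (k + 1 + (k - 1 - i)) = i + 1 := by omega
    have e3 : (-1 : ℤ) ^ (k + 1 + (k - 1 - i)) = (-1) ^ i := by
      have : k + 1 + (k - 1 - i) + 2 * i = 2 * k + i := by omega
      have h3 := congrArg (fun n => (-1 : ℤ) ^ n) this
      simpa [pow_add, pow_mul] using h3
    rw [e1, e2, e3]; ring
  have e : 2 * k + 1 - k = k + 1 := by omega
  rw [hrev, e, mul_assoc, hk] at h'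
  rcases Nat.even_or_odd k with he | ho
  · rw [he.neg_one_pow] at h'
    rw [he.add_one.neg_one_pow]
    omega
  · rw [ho.neg_one_pow] at h'
    rw [ho.add_one.neg_one_pow]
    omega

/-- For every odd `p ≥ 3`, the binary sequence of length `7p-2` with run-length
encoding `(p, p, 2p, p, p-1, p-1)` starting with +1 is a counterexample to
Theorem 1(iv) of Turyn and Storer with `t = 3p`. -/
theorem counterexample_family_turyn_storer
    (p : ℕ) (hodd : Odd p) (hp : 3 ≤ p) (x : ℕ → ℤ)
    (h1 : ∀ i : ℕ, 1 ≤ i → i ≤ p → x i = 1)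
    (h2 : ∀ i : ℕ, p + 1 ≤ i → i ≤ 2 * p → x i = -1)
    (h3 : ∀ i : ℕ, 2 * p + 1 ≤ i → i ≤ 4 * p → x i = 1)
    (h4 : ∀ i : ℕ, 4 * p + 1 ≤ i → i ≤ 5 * p → x i = -1)
    (h5 : ∀ i : ℕ, 5 * p + 1 ≤ i → i ≤ 6 * p - 1 → x i = 1)
    (h6 : ∀ i : ℕ, 6 * p ≤ i → i ≤ 7 * p - 2 → x i = -1) :
    -- x satisfies equation (k) for all 1 ≤ k ≤ 3p
    (∀ k : ℕ, 1 ≤ k → k ≤ 3 * p → SatisfiesEqn x k) ∧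
    -- the derived sequence z_j = x_{p(j-1)+1} equals (1,-1,1,1,-1,1,-1) ...
    (∀ j : ℕ, 1 ≤ j → j ≤ 7 → x (p * (j - 1) + 1) = z7 j) ∧
    -- ... and does not satisfy equation (3), even though 3 ≤ 3p/p
    ¬ SatisfiesEqn (fun j => x (p * (j - 1) + 1)) 3 ∧
    (3 : ℚ) ≤ (3 * p : ℚ) / (p : ℚ) := by
  have hx : ∀ i : ℕ, 1 ≤ i → i ≤ 6 * p + 1 → x i = if i ≤ p then 1 else if i ≤ 2 * p then -1
      else if i ≤ 4 * p then 1 else if i ≤ 5 * p then -1 else if i ≤ 6 * p - 1 then 1 else -1 := by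
    intro i hi hi'
    split_ifs
    · exact h1 i (by omega) (by omega)
    · exact h2 i (by omega) (by omega)
    · exact h3 i (by omega) (by omega)
    · exact h4 i (by omega) (by omega)
    · exact h5 i (by omega) (by omega)
    · exact h6 i (by omega) (by omega)
  have hz : ∀ j : ℕ, 1 ≤ j → j ≤ 7 → x (p * (j - 1) + 1) = z7 j := by
    intro j hj hj'
    interval_cases j <;> simp only [z7] <;> norm_num
    · exact h1 _ (by omega) (by omega)
    · exact h2 _ (by omega) (by omega)
    · exact h3 _ (by omega) (by omega)
    · exact h3 _ (by omega) (by omega)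
    · exact h4 _ (by omega) (by omega)
    · exact h5 _ (by omega) (by omega)
    · exact h6 _ (by omega) (by omega)
  refine ⟨?_, hz, ?_, ?_⟩
  · intro k hk hk'
    apply fold_sum
    · rw [hx _ (by omega) (by omega)]
      split_ifs <;> norm_num
    · have hc := key_coeff (6 * p) _ (key_mul p hodd hp _ (key_dvd p hodd hp x hx)) k (by omega)
      rw [mul_comm (PowerSeries.mk _), PowerSeries.coeff_mul,
        Finset.Nat.sum_antidiagonal_eq_sum_range_succ_mk] at hc
      refine Eq.trans ?_ hc
      refine Finset.sum_congr rfl fun i hi => ?_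
      rw [Finset.mem_range] at hi
      have : 2 * k + 1 - i = 2 * k - i + 1 := by omega
      simp only [PowerSeries.coeff_rescale, PowerSeries.coeff_mk, this]
  · intro h
    unfold SatisfiesEqn at h
    have : Finset.Icc 1 3 = ({1, 2, 3} : Finset ℕ) := by decide
    rw [Finset.sum_congr rfl (g := fun i => (-1 : ℤ) ^ (i + 1) * z7 i * z7 (2 * 3 + 2 - i))] at h
    · revert h; rw [this]; decide
    · intro i hi
      rw [Finset.mem_Icc] at hi
      rw [← hz i (by omega) (by omega), ← hz (2 * 3 + 2 - i) (by omega) (by omega)]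
  · have : (p : ℚ) ≠ 0 := by positivity
    rw [mul_div_assoc, div_self this]; norm_num
end
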